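/- Let r ∈ (0,1]. There exists a constant C > 0 such that for every T > 0 and every φ₀ ∈ H¹(ℝ) ∩ L²(|x|^{2r}dx): sup_{t ∈ [0,T]} ‖|x|^r e^{it∂_x²} φ₀‖_{L²} ≤ C[(T^{r/2} + T^{r})‖φ₀‖_{H¹} + ‖|x|^r φ₀‖_{L²}]. -/

import Mathlib

open MeasureTheory Filter
open scoped ENNReal NNReal

noncomputable section

/-- The Fourier transform `f̂(ξ) = ∫ e^{-ixξ} f(x) dx` (paper convention). -/
def fourierT (f : ℝ → ℂ) (ξ : ℝ) : ℂ :=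
  ∫ x : ℝ, Complex.exp (-(Complex.I * x * ξ)) * f x

/-- The Sobolev `H^s` norm `(∫ (1+|ξ|²)^s |f̂(ξ)|² dξ)^{1/2}`. -/
def HsNorm (s : ℝ) (f : ℝ → ℂ) : ℝ≥0∞ :=
  (∫⁻ ξ : ℝ, ENNReal.ofReal ((1 + ξ ^ 2) ^ s * ‖fourierT f ξ‖ ^ 2)) ^ (1/2 : ℝ)

/-- Membership in the Sobolev space `H^s(ℝ)`. -/
def MemHs (s : ℝ) (f : ℝ → ℂ) : Prop := HsNorm s f < ⊤

/-- The weighted norm `‖|x|^r f‖_{L²} = (∫ |f(x)|² |x|^{2r} dx)^{1/2}`. -/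
def wNorm (r : ℝ) (f : ℝ → ℂ) : ℝ≥0∞ :=
  (∫⁻ x : ℝ, (‖f x‖₊ : ℝ≥0∞) ^ 2 * ENNReal.ofReal (|x| ^ (2 * r))) ^ (1/2 : ℝ)

/-- Membership in the weighted space `L²(|x|^{2r} dx)`. -/
def MemW (r : ℝ) (f : ℝ → ℂ) : Prop := wNorm r f < ⊤

/-- The mixed norm `‖u‖_{L^∞_T L²_x}` (functions written as `u x t`). -/
def LinfL2 (T : ℝ) (u : ℝ → ℝ → ℂ) : ℝ≥0∞ :=
  ⨆ t ∈ Set.Icc (0:ℝ) T, eLpNorm (fun x => u x t) 2 volume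

/-- The mixed norm `‖u‖_{L⁴_T L^∞_x}`. -/
def L4Linf (T : ℝ) (u : ℝ → ℝ → ℂ) : ℝ≥0∞ :=
  (∫⁻ t in Set.Icc (0:ℝ) T, eLpNorm (fun x => u x t) ⊤ volume ^ (4:ℕ)) ^ (1/4 : ℝ)

/-- The norm `⦀u⦀ = ‖u‖_{L^∞_T L²_x} + ‖u‖_{L⁴_T L^∞_x}`. -/
def tnorm (T : ℝ) (u : ℝ → ℝ → ℂ) : ℝ≥0∞ := LinfL2 T u + L4Linf T u

/-- The mixed norm `‖u‖_{L^∞_T H^s_x}`. -/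
def LinfHs (T s : ℝ) (u : ℝ → ℝ → ℂ) : ℝ≥0∞ :=
  ⨆ t ∈ Set.Icc (0:ℝ) T, HsNorm s (fun x => u x t)

/-- The mixed norm `‖|x|^r u‖_{L^∞_T L²_x}`. -/
def LinfW (T r : ℝ) (u : ℝ → ℝ → ℂ) : ℝ≥0∞ :=
  ⨆ t ∈ Set.Icc (0:ℝ) T, wNorm r (fun x => u x t)

/-- The gaugeFactor factor `exp(iλ ∫_{-∞}^x |f(y)|² dy)`. -/
def gaugeFactor (l : ℝ) (f : ℝ → ℂ) (x : ℝ) : ℂ :=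
  Complex.exp (Complex.I * (l : ℂ) * ((∫ y in Set.Iic x, Complex.normSq (f y) : ℝ) : ℂ))

/-- The free Schrödinger group `e^{it∂_x²}`, given by the multiplier `e^{-itξ²}`:
`(e^{it∂_x²}f)(x) = (2π)⁻¹ ∫ e^{ixξ} e^{-itξ²} f̂(ξ) dξ`. -/
def schrod (t : ℝ) (f : ℝ → ℂ) (x : ℝ) : ℂ :=
  (2 * Real.pi : ℂ)⁻¹ * ∫ ξ : ℝ, Complex.exp (Complex.I * (x * ξ - t * ξ ^ 2)) * fourierT f ξ

/-- Spatial derivative `∂_x u` of a function `u = u(x,t)`. -/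
def dx (u : ℝ → ℝ → ℂ) : ℝ → ℝ → ℂ := fun x t => deriv (fun y => u y t) x

/-- `u` solves the DNLS equation `i∂_t u + ∂_x² u = iλ∂_x(|u|²u)` on `ℝ × (0,T]`. -/
def solvesDNLS (l T : ℝ) (u : ℝ → ℝ → ℂ) : Prop :=
  ∀ x : ℝ, ∀ t ∈ Set.Ioc (0:ℝ) T,
    Complex.I * deriv (fun τ => u x τ) t + deriv (fun y => deriv (fun z => u z t) y) x
      = Complex.I * (l : ℂ) * deriv (fun y => (Complex.normSq (u y t) : ℂ) * u y t) x

/-- `(φ, ψ)` solves the NLS system `i∂_t φ + ∂_x² φ = -iλφ²ψ̄`, `i∂_t ψ + ∂_x² ψ = iλψ²φ̄`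
on `ℝ × (0,T]`. -/
def solvesNLS (l T : ℝ) (φ ψ : ℝ → ℝ → ℂ) : Prop :=
  (∀ x : ℝ, ∀ t ∈ Set.Ioc (0:ℝ) T,
    Complex.I * deriv (fun τ => φ x τ) t + deriv (fun y => deriv (fun z => φ z t) y) x
      = -(Complex.I * (l : ℂ)) * (φ x t) ^ 2 * (starRingEnd ℂ) (ψ x t)) ∧
  (∀ x : ℝ, ∀ t ∈ Set.Ioc (0:ℝ) T,
    Complex.I * deriv (fun τ => ψ x τ) t + deriv (fun y => deriv (fun z => ψ z t) y) x
      = Complex.I * (l : ℂ) * (ψ x t) ^ 2 * (starRingEnd ℂ) (φ x t))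

/-- Regularity class `C([0,T];H²(ℝ)) ∩ C¹([0,T];L²(ℝ))` (rendered as: joint continuity,
`H²` in space at each time, differentiability in time, time derivative in `L² = H⁰`). -/
def regClass (T : ℝ) (u : ℝ → ℝ → ℂ) : Prop :=
  Continuous (fun p : ℝ × ℝ => u p.1 p.2) ∧
  (∀ t ∈ Set.Icc (0:ℝ) T, MemHs 2 (fun x => u x t)) ∧
  (∀ x : ℝ, ∀ t ∈ Set.Icc (0:ℝ) T, DifferentiableAt ℝ (fun τ => u x τ) t) ∧
  (∀ t ∈ Set.Icc (0:ℝ) T, MemHs 0 (fun x => deriv (fun τ => u x τ) t))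

/-- `(φ, ψ)` is a solution of the NLS system with data `(φ₀, ψ₀)` that stays in
`H²(ℝ) ∩ L²(|x|^{2r}dx)` on `(0,T]`. -/
def goodSol (l r T : ℝ) (φ₀ ψ₀ : ℝ → ℂ) (φ ψ : ℝ → ℝ → ℂ) : Prop :=
  solvesNLS l T φ ψ ∧ (∀ x, φ x 0 = φ₀ x) ∧ (∀ x, ψ x 0 = ψ₀ x) ∧
  ∀ t ∈ Set.Ioc (0:ℝ) T, MemHs 2 (fun x => φ x t) ∧ MemW r (fun x => φ x t) ∧
    MemHs 2 (fun x => ψ x t) ∧ MemW r (fun x => ψ x t)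

end

open scoped FourierTransform ContDiff SchwartzMap in
lemma aux_plancherel (g : ℝ → ℂ) (hg : Integrable g) (hg2 : MemLp g 2) :
    ∫⁻ ξ, ‖𝓕 g ξ‖ₑ ^ 2 = ∫⁻ x, ‖g x‖ₑ ^ 2 := by
  have hae : ∀ᵐ x, (𝓕 (hg2.toLp g) : Lp ℂ 2 (volume : Measure ℝ)) x = 𝓕 g x := by
    apply ae_eq_of_integral_contDiff_smul_eq
    · exact (Lp.memLp _).locallyIntegrable (by norm_num)
    · apply Continuous.locallyIntegrable
      exact VectorFourier.fourierIntegral_continuous Real.continuous_fourierChar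
        (by exact continuous_inner) hg
    · intro ψ hψ hψc
      have h1 : HasCompactSupport (fun x => (ψ x : ℂ)) := hψc.comp_left (g := fun y : ℝ => (y : ℂ)) (by simp)
      have h2 : ContDiff ℝ ∞ (fun x => (ψ x : ℂ)) := by
        exact Complex.ofRealCLM.contDiff.comp hψ
      let Ψ : 𝓢(ℝ, ℂ) := h1.toSchwartzMap h2
      have e := congrArg (fun D => D Ψ) (Lp.fourier_toTemperedDistribution_eq (hg2.toLp g))
      simp only [TemperedDistribution.fourier_apply, Lp.toTemperedDistribution_apply] at e
      have e2 : ∫ x, (𝓕 Ψ) x • (hg2.toLp g) x = ∫ x, (𝓕 Ψ) x • g x := by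
        apply integral_congr_ae
        filter_upwards [hg2.coeFn_toLp] with x hx
        rw [hx]
      have e3 : ∫ x, (𝓕 Ψ) x • g x = ∫ x, Ψ x • 𝓕 g x := by
        simpa using! VectorFourier.integral_bilin_fourierIntegral_eq_flip (.lsmul ℂ ℂ)
          (L := innerₗ ℝ) (μ := volume) (ν := volume)
          Real.continuous_fourierChar continuous_inner Ψ.integrable hg
      have e4 : ∀ F : ℝ → ℂ, ∫ x, ψ x • F x = ∫ x, Ψ x • F x := by
        intro F
        apply integral_congr_ae
        filter_upwards with x
        simp [Ψ]
      rw [e4, e4, ← e, e2, e3]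
  have hn := Lp.norm_fourier_eq (hg2.toLp g)
  have hn2 : ‖(𝓕 (hg2.toLp g) : Lp ℂ 2 (volume : Measure ℝ))‖ₑ = ‖hg2.toLp g‖ₑ := by
    rw [enorm_eq_iff_norm_eq]; exact hn
  rw [Lp.enorm_def, Lp.enorm_def, eLpNorm_congr_ae hae, eLpNorm_congr_ae hg2.coeFn_toLp] at hn2
  have key : ∀ F : ℝ → ℂ, ∫⁻ x, ‖F x‖ₑ ^ 2 = eLpNorm F 2 volume ^ (2:ℕ) := by
    intro F
    have := eLpNorm_nnreal_pow_eq_lintegral (f := F) (μ := volume) (p := 2) (by norm_num)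
    simp at this
    rw [← this]
  rw [key, key]
  exact congrArg (· ^ 2) hn2

open scoped FourierTransform in
lemma aux_fT (g : ℝ → ℂ) (ξ : ℝ) : fourierT g ξ = 𝓕 g (ξ * (2 * Real.pi)⁻¹) := by
  rw [Real.fourier_real_eq_integral_exp_smul]
  unfold fourierT
  congr 1 with x
  rw [smul_eq_mul]
  congr 2
  have : (Real.pi : ℂ) ≠ 0 := by exact_mod_cast Real.pi_ne_zero
  push_cast
  field_simp

lemma aux_lint_scale (F : ℝ → ℝ≥0∞) (a : ℝ) (ha : a ≠ 0) :
    ∫⁻ x, F (x * a) = ENNReal.ofReal |a⁻¹| * ∫⁻ x, F x := by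
  rw [← smul_eq_mul, ← lintegral_smul_measure, ← Real.map_volume_mul_right ha]
  exact ((Homeomorph.mulRight₀ a ha).measurableEmbedding.lintegral_map F).symm

lemma aux_planchT (g : ℝ → ℂ) (hg : Integrable g) :
    ∫⁻ ξ, ‖fourierT g ξ‖ₑ ^ 2 ≤ ENNReal.ofReal (2 * Real.pi) * ∫⁻ x, ‖g x‖ₑ ^ 2 := by
  have hpi := Real.pi_pos
  by_cases h : ∫⁻ x, ‖g x‖ₑ ^ 2 = ⊤
  · rw [h, ENNReal.mul_top (by simpa using hpi)]; exact le_top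
  · have hg2 : MemLp g 2 := by
      refine ⟨hg.1, ?_⟩
      rw [eLpNorm_lt_top_iff_lintegral_rpow_enorm_lt_top (by norm_num) (by norm_num)]
      simpa using lt_top_iff_ne_top.2 h
    simp_rw [aux_fT]
    rw [aux_lint_scale (fun y => ‖_‖ₑ ^ 2) _ (by positivity), aux_plancherel g hg hg2, inv_inv, abs_of_pos (by positivity)]

/-- squared size of the oscillating difference -/
noncomputable def aux_E (a : ℝ) : ℝ≥0∞ := ‖Complex.exp (Complex.I * a) - 1‖ₑ ^ 2

lemma aux_sq_add (a b : ℂ) : ‖a + b‖ₑ ^ 2 ≤ 2 * ‖a‖ₑ ^ 2 + 2 * ‖b‖ₑ ^ 2 := by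
  have h : ‖a + b‖ ^ 2 ≤ 2 * ‖a‖ ^ 2 + 2 * ‖b‖ ^ 2 := by
    have := norm_add_le a b
    nlinarith [norm_nonneg (a + b), norm_nonneg a, norm_nonneg b, sq_nonneg (‖a‖ - ‖b‖)]
  have h2 : ‖a + b‖₊ ^ 2 ≤ 2 * ‖a‖₊ ^ 2 + 2 * ‖b‖₊ ^ 2 := by exact_mod_cast h
  simp only [enorm_eq_nnnorm]
  exact_mod_cast h2

lemma aux_unit (a : ℝ) : ‖Complex.exp (Complex.I * a)‖ₑ = 1 := by
  rw [← ofReal_norm, Complex.norm_exp_I_mul_ofReal]; simp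

lemma aux_E_add (a b : ℝ) : aux_E (a + b) ≤ 2 * aux_E a + 2 * aux_E b := by
  unfold aux_E
  have : Complex.exp (Complex.I * ((a + b : ℝ) : ℂ)) - 1
      = Complex.exp (Complex.I * b) * (Complex.exp (Complex.I * a) - 1)
        + (Complex.exp (Complex.I * b) - 1) := by
    push_cast
    rw [mul_add, Complex.exp_add]; ring
  rw [this]
  refine (aux_sq_add _ _).trans ?_
  rw [enorm_mul, aux_unit, one_mul]

lemma aux_E_meas : Measurable aux_E := by
  unfold aux_E
  fun_prop

lemma aux_fT_cont (f : ℝ → ℂ) (hf : Integrable f) : Continuous (fourierT f) := by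
  have : fourierT f = fun ξ => FourierTransform.fourier f (ξ * (2 * Real.pi)⁻¹) := funext (aux_fT f)
  rw [this]
  have h : Continuous (FourierTransform.fourier f : ℝ → ℂ) :=
    VectorFourier.fourierIntegral_continuous Real.continuous_fourierChar
        (by exact continuous_inner) hf
  exact h.comp (by fun_prop)

lemma aux_fT_int (f : ℝ → ℂ) (hf : Integrable f) (ξ : ℝ) :
    Integrable (fun x : ℝ => Complex.exp (-(Complex.I * x * ξ)) * f x) := by
  refine (hf.bdd_mul (c := 1) (Continuous.aestronglyMeasurable (by fun_prop)) ?_)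
  filter_upwards with x
  have : -(Complex.I * x * ξ) = Complex.I * ((-(x * ξ) : ℝ) : ℂ) := by push_cast; ring
  rw [this, Complex.norm_exp_I_mul_ofReal]

/-- modulation -/
lemma aux_mod (f : ℝ → ℂ) (hf : Integrable f) (h : ℝ) :
    ∫⁻ ξ, ‖fourierT f (ξ - h) - fourierT f ξ‖ₑ ^ 2
      ≤ ENNReal.ofReal (2 * Real.pi) * ∫⁻ x, aux_E (x * h) * ‖f x‖ₑ ^ 2 := by
  let F : ℝ → ℂ := fun x => (Complex.exp (Complex.I * ((x * h : ℝ) : ℂ)) - 1) * f x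
  have hF : Integrable F := by
    refine (hf.bdd_mul (c := 2) (Continuous.aestronglyMeasurable (by fun_prop)) ?_)
    filter_upwards with x
    refine (norm_sub_le _ _).trans ?_
    rw [Complex.norm_exp_I_mul_ofReal]; norm_num
  have e : ∀ ξ, fourierT f (ξ - h) - fourierT f ξ = fourierT F ξ := by
    intro ξ
    unfold fourierT
    rw [← integral_sub (aux_fT_int f hf _) (aux_fT_int f hf _)]
    congr 1 with x
    have : -(Complex.I * x * ((ξ - h : ℝ) : ℂ)) = -(Complex.I * x * ξ) + Complex.I * ((x * h : ℝ) : ℂ) := by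
      push_cast; ring
    rw [this, Complex.exp_add]
    simp only [F]; ring
  simp_rw [e]
  refine (aux_planchT F hF).trans (le_of_eq ?_)
  congr 2 with x
  simp only [F, aux_E, enorm_mul, mul_pow]

/-- translation -/
lemma aux_trans (g : ℝ → ℂ) (hg : Integrable g) (h : ℝ) :
    ∫⁻ x, aux_E (x * h) * ‖(2 * Real.pi : ℂ)⁻¹ * fourierT g (-x)‖ₑ ^ 2
      ≤ ENNReal.ofReal (2 * Real.pi)⁻¹ * ∫⁻ ξ, ‖g (ξ - h) - g ξ‖ₑ ^ 2 := by
  have hpi := Real.pi_pos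
  have hG : Integrable (fun ξ => g (ξ - h) - g ξ) := (hg.comp_sub_right h).sub hg
  have e : ∀ x, (Complex.exp (Complex.I * ((x * h : ℝ) : ℂ)) - 1) * fourierT g (-x)
      = fourierT (fun ξ => g (ξ - h) - g ξ) (-x) := by
    intro x
    unfold fourierT
    simp_rw [mul_sub]
    rw [integral_sub (aux_fT_int _ (hg.comp_sub_right h) (-x)) (aux_fT_int g hg _),
      sub_mul, one_mul, ← integral_const_mul]
    congr 1
    rw [← integral_sub_right_eq_self _ h]
    congr 1 with ξ
    rw [← mul_assoc, ← Complex.exp_add]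
    congr 2
    push_cast; ring
  have e2 : ∀ x, aux_E (x * h) * ‖(2 * Real.pi : ℂ)⁻¹ * fourierT g (-x)‖ₑ ^ 2
      = ENNReal.ofReal ((2 * Real.pi)⁻¹) ^ 2 * ‖fourierT (fun ξ => g (ξ - h) - g ξ) (-x)‖ₑ ^ 2 := by
    intro x
    rw [← e, enorm_mul, enorm_mul, aux_E]
    have : ‖(2 * Real.pi : ℂ)⁻¹‖ₑ = ENNReal.ofReal ((2 * Real.pi)⁻¹) := by
      rw [← ofReal_norm]; congr 1
      simp [abs_of_pos hpi]
    rw [this]; ring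
  simp_rw [e2]
  rw [lintegral_const_mul' _ _ (by simp)]
  have e3 : ∫⁻ x, ‖fourierT (fun ξ => g (ξ - h) - g ξ) (-x)‖ₑ ^ 2
      = ∫⁻ x, ‖fourierT (fun ξ => g (ξ - h) - g ξ) x‖ₑ ^ 2 :=
    lintegral_neg_eq_self (fun x => ‖fourierT (fun ξ => g (ξ - h) - g ξ) x‖ₑ ^ 2)
  rw [e3]
  refine (mul_le_mul_right (aux_planchT _ hG) _).trans (le_of_eq ?_)
  rw [← mul_assoc, ← ENNReal.ofReal_pow (by positivity), ← ENNReal.ofReal_mul (by positivity)]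
  congr 2
  field_simp

/-- The key difference inequality. -/
lemma aux_key (f : ℝ → ℂ) (hf : Integrable f) (hF : Integrable (fourierT f)) (t h : ℝ) :
    ∫⁻ x, aux_E (x * h) * ‖schrod t f x‖ₑ ^ 2
      ≤ 2 * (∫⁻ x, aux_E (x * h) * ‖f x‖ₑ ^ 2)
        + ∫⁻ η, (aux_E (-(2 * t * η) * h) + aux_E (-(t * h ^ 2))) * ‖fourierT f η‖ₑ ^ 2 := by
  have hpi := Real.pi_pos
  have hfc := aux_fT_cont f hf
  let g : ℝ → ℂ := fun ξ => Complex.exp (Complex.I * ((-(t * ξ ^ 2) : ℝ) : ℂ)) * fourierT f ξ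
  have hg : Integrable g := by
    refine (hF.bdd_mul (c := 1) (Continuous.aestronglyMeasurable (by fun_prop)) ?_)
    filter_upwards with x
    rw [Complex.norm_exp_I_mul_ofReal]
  have e : ∀ x, schrod t f x = (2 * Real.pi : ℂ)⁻¹ * fourierT g (-x) := by
    intro x
    unfold schrod
    congr 1
    rw [fourierT]
    congr 1 with ξ
    simp only [g]
    rw [← mul_assoc, ← Complex.exp_add]
    congr 2
    push_cast; ring
  simp_rw [e]
  refine (aux_trans g hg h).trans ?_
  have b : ∀ ξ, ‖g (ξ - h) - g ξ‖ₑ ^ 2 ≤ 2 * ‖fourierT f (ξ - h) - fourierT f ξ‖ₑ ^ 2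
      + 4 * ((aux_E (-(2 * t * (ξ - h)) * h) + aux_E (-(t * h ^ 2))) * ‖fourierT f (ξ - h)‖ₑ ^ 2) := by
    intro ξ
    have d : g (ξ - h) - g ξ = Complex.exp (Complex.I * ((-(t * ξ ^ 2) : ℝ) : ℂ)) * (fourierT f (ξ - h) - fourierT f ξ)
        + (-Complex.exp (Complex.I * ((-(t * (ξ - h) ^ 2) : ℝ) : ℂ))) *
          ((Complex.exp (Complex.I * ((-(2 * t * (ξ - h)) * h + -(t * h ^ 2) : ℝ) : ℂ)) - 1) * fourierT f (ξ - h)) := by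
      have : Complex.exp (Complex.I * ((-(t * ξ ^ 2) : ℝ) : ℂ)) =
        Complex.exp (Complex.I * ((-(t * (ξ - h) ^ 2) : ℝ) : ℂ)) *
        Complex.exp (Complex.I * ((-(2 * t * (ξ - h)) * h + -(t * h ^ 2) : ℝ) : ℂ)) := by
        rw [← Complex.exp_add]; congr 1; push_cast; ring
      simp only [g]
      rw [this]; ring
    rw [d]
    refine (aux_sq_add _ _).trans ?_
    rw [enorm_mul, aux_unit, one_mul, enorm_mul, enorm_neg, aux_unit, one_mul, enorm_mul, mul_pow]
    refine add_le_add_right ?_ _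
    have := aux_E_add (-(2 * t * (ξ - h)) * h) (-(t * h ^ 2))
    rw [← mul_assoc, ← mul_assoc]
    refine mul_le_mul_left ?_ _
    refine (mul_le_mul_right this 2).trans (le_of_eq ?_)
    ring
  have m1 : Measurable (fun η => (aux_E (-(2 * t * η) * h) + aux_E (-(t * h ^ 2))) * ‖fourierT f η‖ₑ ^ 2) := by
    have := aux_E_meas
    have := hfc.measurable
    fun_prop
  have m2 : Measurable (fun ξ => ‖fourierT f (ξ - h) - fourierT f ξ‖ₑ ^ 2) := by
    have := hfc.measurable
    fun_prop
  calc _ ≤ ENNReal.ofReal (2 * Real.pi)⁻¹ * (2 * (ENNReal.ofReal (2 * Real.pi) * ∫⁻ x, aux_E (x * h) * ‖f x‖ₑ ^ 2)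
      + 4 * ∫⁻ η, (aux_E (-(2 * t * η) * h) + aux_E (-(t * h ^ 2))) * ‖fourierT f η‖ₑ ^ 2) := by
        refine mul_le_mul_right ((lintegral_mono b).trans ?_) _
        rw [lintegral_add_left (m2.const_mul 2), lintegral_const_mul _ m2]
        refine add_le_add (mul_le_mul_right (aux_mod f hf h) _) ?_
        rw [lintegral_sub_right_eq_self (fun ξ => 4 * ((aux_E (-(2 * t * ξ) * h) + aux_E (-(t * h ^ 2))) * ‖fourierT f ξ‖ₑ ^ 2)) h,
          lintegral_const_mul _ m1]
    _ ≤ _ := by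
      rw [mul_add]
      refine add_le_add (le_of_eq ?_) ?_
      · rw [mul_left_comm, ← mul_assoc (ENNReal.ofReal _), ← ENNReal.ofReal_mul (by positivity),
          inv_mul_cancel₀ (by positivity), ENNReal.ofReal_one, one_mul]
      · rw [← mul_assoc]
        refine mul_le_of_le_one_left (by positivity) ?_
        have h4 : (4 : ℝ≥0∞) = ENNReal.ofReal 4 := by simp
        rw [h4, ← ENNReal.ofReal_mul (by positivity), ENNReal.ofReal_le_one, inv_mul_le_iff₀ (by positivity)]
        linarith [Real.pi_gt_three]

lemma aux_integrable_fT (f : ℝ → ℂ) (hf : Integrable f)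
    (h : ∫⁻ ξ : ℝ, ENNReal.ofReal ((1 + ξ ^ 2) ^ (1:ℝ) * ‖fourierT f ξ‖ ^ 2) ≠ ⊤) :
    Integrable (fourierT f) := by
  have hc := aux_fT_cont f hf
  have h1 : Integrable (fun ξ : ℝ => (1 + ξ ^ 2) * ‖fourierT f ξ‖ ^ 2) := by
    refine ⟨(Continuous.aestronglyMeasurable (by fun_prop)), ?_⟩
    rw [hasFiniteIntegral_iff_ofReal (by filter_upwards with x; positivity)]
    simpa using lt_top_iff_ne_top.2 h
  refine (integrable_inv_one_add_sq.add h1).mono' hc.aestronglyMeasurable ?_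
  filter_upwards with ξ
  simp only [Pi.add_apply]
  have hp : 0 < 1 + ξ ^ 2 := by positivity
  have : (1 + ξ ^ 2)⁻¹ + (1 + ξ ^ 2) * ‖fourierT f ξ‖ ^ 2 - 2 * ‖fourierT f ξ‖
      = (1 + ξ ^ 2)⁻¹ * (1 - (1 + ξ ^ 2) * ‖fourierT f ξ‖) ^ 2 := by
    field_simp; ring
  have h2 : 0 ≤ (1 + ξ ^ 2)⁻¹ * (1 - (1 + ξ ^ 2) * ‖fourierT f ξ‖) ^ 2 := by positivity
  linarith [norm_nonneg (fourierT f ξ)]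

lemma aux_schrod_meas (f : ℝ → ℂ) (hf : Integrable f) (hF : Integrable (fourierT f)) (t : ℝ) :
    Measurable (schrod t f) := by
  have hfc := aux_fT_cont f hf
  let g : ℝ → ℂ := fun ξ => Complex.exp (Complex.I * ((-(t * ξ ^ 2) : ℝ) : ℂ)) * fourierT f ξ
  have hg : Integrable g := by
    refine (hF.bdd_mul (c := 1) (Continuous.aestronglyMeasurable (by fun_prop)) ?_)
    filter_upwards with x
    rw [Complex.norm_exp_I_mul_ofReal]
  have e : schrod t f = fun x => (2 * Real.pi : ℂ)⁻¹ * fourierT g (-x) := by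
    ext x
    unfold schrod
    congr 1
    rw [fourierT]
    congr 1 with ξ
    simp only [g]
    rw [← mul_assoc, ← Complex.exp_add]
    congr 2
    push_cast; ring
  have := aux_fT_cont g hg
  rw [e]
  exact Continuous.measurable (by fun_prop)

/-- weight -/
noncomputable def aux_w (r : ℝ) (h : ℝ) : ℝ≥0∞ := ENNReal.ofReal (|h| ^ (-1 - 2 * r))

lemma aux_w_meas (r : ℝ) : Measurable (aux_w r) := by
  unfold aux_w
  fun_prop

lemma aux_scale (r : ℝ) (hr : 0 < r) (φ : ℝ → ℝ≥0∞) (h0 : φ 0 = 0) (l : ℝ) :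
    ∫⁻ h, aux_w r h * φ (l * h) = ENNReal.ofReal (|l| ^ (2 * r)) * ∫⁻ h, aux_w r h * φ h := by
  by_cases hl : l = 0
  · subst hl
    simp [h0, Real.zero_rpow (show 2 * r ≠ 0 by positivity)]
  have hl' : 0 < |l| := abs_pos.2 hl
  have e := aux_lint_scale (fun h => aux_w r h * φ h) l hl
  have e1 : ∀ h, aux_w r (h * l) = ENNReal.ofReal (|l| ^ (-1 - 2 * r)) * aux_w r h := by
    intro h
    unfold aux_w
    rw [← ENNReal.ofReal_mul (by positivity), abs_mul, Real.mul_rpow (abs_nonneg _) (abs_nonneg _), mul_comm]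
  simp_rw [e1, mul_assoc] at e
  rw [lintegral_const_mul' _ _ (by simp)] at e
  have e2 : ENNReal.ofReal (|l| ^ (1 + 2 * r)) * ENNReal.ofReal (|l| ^ (-1 - 2 * r)) = 1 := by
    rw [← ENNReal.ofReal_mul (by positivity), ← Real.rpow_add hl']
    ring_nf; simp
  have e3 : ENNReal.ofReal (|l| ^ (1 + 2 * r)) * ENNReal.ofReal |l⁻¹| = ENNReal.ofReal (|l| ^ (2 * r)) := by
    rw [← ENNReal.ofReal_mul (by positivity), Real.rpow_add hl', abs_inv]
    congr 1
    rw [Real.rpow_one]; field_simp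
  calc _ = (ENNReal.ofReal (|l| ^ (1 + 2 * r)) * ENNReal.ofReal (|l| ^ (-1 - 2 * r))) * ∫⁻ h, aux_w r h * φ (h * l) := by
        rw [e2, one_mul]; simp_rw [mul_comm l]
    _ = _ := by rw [mul_assoc, e, ← mul_assoc, e3]

lemma aux_E_le_four (a : ℝ) : aux_E a ≤ 4 := by
  unfold aux_E
  have : ‖Complex.exp (Complex.I * a) - 1‖ₑ ≤ 2 := by
    refine (enorm_sub_le).trans ?_
    rw [aux_unit]; simp; norm_num
  calc _ ≤ (2 : ℝ≥0∞) ^ 2 := by gcongr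
    _ = 4 := by norm_num

lemma aux_E_le_sq (a : ℝ) : aux_E a ≤ ENNReal.ofReal (a ^ 2) := by
  unfold aux_E
  calc _ ≤ ‖a‖ₑ ^ 2 := by
        gcongr
        exact Real.enorm_exp_I_mul_ofReal_sub_one_le
    _ = _ := by rw [← ofReal_norm, ← ENNReal.ofReal_pow (norm_nonneg _), Real.norm_eq_abs, sq_abs]

lemma aux_fin (r : ℝ) (hr : 0 < r) (hr1 : r < 1) (φ : ℝ → ℝ≥0∞)
    (h4 : ∀ h, φ h ≤ 4) (h2 : ∀ h, |h| ≤ 1 → φ h ≤ ENNReal.ofReal (h ^ 2)) :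
    ∫⁻ h, aux_w r h * φ h ≠ ⊤ := by
  let G : ℝ → ℝ := fun h => if h ≤ 1 then h ^ (1 - 2 * r) else 4 * h ^ (-1 - 2 * r)
  have hG0 : ∀ h, 0 ≤ h → 0 ≤ G h := by
    intro h hh; simp only [G]; split_ifs <;> positivity
  have hG : IntegrableOn G (Set.Ioi 0) := by
    rw [← Set.Ioc_union_Ioi_eq_Ioi zero_le_one]
    refine IntegrableOn.union ?_ ?_
    · have : IntegrableOn (fun h : ℝ => h ^ (1 - 2 * r)) (Set.Ioc 0 1) := by
        rw [← intervalIntegrable_iff_integrableOn_Ioc_of_le zero_le_one]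
        exact intervalIntegral.intervalIntegrable_rpow' (by linarith)
      refine this.congr_fun ?_ measurableSet_Ioc
      intro h hh
      simp [G, hh.2]
    · have : IntegrableOn (fun h : ℝ => 4 * h ^ (-1 - 2 * r)) (Set.Ioi 1) :=
        (integrableOn_Ioi_rpow_of_lt (by linarith) one_pos).const_mul 4
      refine this.congr_fun ?_ measurableSet_Ioi
      intro h hh
      have h1 : ¬ h ≤ 1 := not_le.2 (Set.mem_Ioi.1 hh)
      simp [G, h1]
  have hG' : Integrable (fun h => G |h|) := by
    have hpos : IntegrableOn (fun h => G |h|) (Set.Ioi 0) := by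
      refine hG.congr_fun ?_ measurableSet_Ioi
      intro h hh
      simp only [abs_of_pos (Set.mem_Ioi.1 hh)]
    have hneg : IntegrableOn (fun h => G |h|) (Set.Iic 0) := by
      rw [integrableOn_Iic_iff_integrableOn_Iio]
      have := IntegrableOn.comp_neg_Iio (c := (0:ℝ)) (f := fun h => G |h|) (by simpa using hpos)
      simpa using this
    have := hneg.union hpos
    rwa [Set.Iic_union_Ioi, integrableOn_univ] at this
  have hfin := hG'.2
  rw [hasFiniteIntegral_iff_ofReal (by filter_upwards with x; exact hG0 _ (abs_nonneg x))] at hfin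
  refine ne_top_of_le_ne_top hfin.ne (lintegral_mono_ae ?_)
  have : ∀ᵐ h : ℝ, h ≠ 0 := by simp [ae_iff]
  filter_upwards [this] with h hh
  have hp := abs_pos.2 hh
  simp only [G, aux_w]
  split_ifs with hc
  · refine (mul_le_mul_right (h2 h hc) _).trans (le_of_eq ?_)
    rw [← ENNReal.ofReal_mul (by positivity), ← sq_abs, ← Real.rpow_natCast, ← Real.rpow_add hp]
    congr 2; push_cast; ring
  · refine (mul_le_mul_right (h4 h) _).trans (le_of_eq ?_)
    have h4 : (4 : ℝ≥0∞) = ENNReal.ofReal 4 := by simp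
    rw [h4, ← ENNReal.ofReal_mul (by positivity), mul_comm]

lemma aux_pos (r : ℝ) : ∫⁻ h, aux_w r h * aux_E h ≠ 0 := by
  intro h0
  have hm : Measurable (fun h => aux_w r h * aux_E h) := (aux_w_meas r).mul aux_E_meas
  rw [lintegral_eq_zero_iff hm] at h0
  have h1 := ae_iff.1 h0
  have : Set.Ioo (0:ℝ) 1 ⊆ {a | ¬ (fun h => aux_w r h * aux_E h) a = (0 : ℝ → ℝ≥0∞) a} := by
    intro h hh
    simp only [Set.mem_ofPred_eq, Pi.zero_apply, mul_eq_zero, not_or]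
    constructor
    · unfold aux_w
      have : 0 < |h| := abs_pos.2 hh.1.ne'
      simp; positivity
    · unfold aux_E
      rw [pow_eq_zero_iff (by norm_num), enorm_eq_zero, ← norm_eq_zero, Complex.norm_exp_I_mul_ofReal_sub_one]
      have : 0 < Real.sin (h / 2) := Real.sin_pos_of_pos_of_lt_pi (by linarith [hh.1]) (by linarith [hh.2, Real.pi_gt_three])
      simp [this.ne']
  have h2 := measure_mono_null this h1
  simp at h2

lemma aux_ton (r : ℝ) (K : ℝ → ℝ → ℝ≥0∞) (hK : Measurable (fun p : ℝ × ℝ => K p.1 p.2))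
    (F : ℝ → ℝ≥0∞) (hF : AEMeasurable F) :
    ∫⁻ h, aux_w r h * ∫⁻ x, K x h * F x = ∫⁻ x, (∫⁻ h, aux_w r h * K x h) * F x := by
  have hw := aux_w_meas r
  have : ∀ h, aux_w r h * ∫⁻ x, K x h * F x = ∫⁻ x, aux_w r h * (K x h * F x) := fun h =>
    (lintegral_const_mul' _ _ (by simp [aux_w])).symm
  simp_rw [this]
  rw [lintegral_lintegral_swap]
  · congr 1 with x
    rw [← lintegral_mul_const]
    · simp_rw [mul_assoc]
    · have : Measurable (fun h => K x h) := hK.comp (measurable_const.prodMk measurable_id)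
      fun_prop
  · have h1 : Measurable (fun p : ℝ × ℝ => K p.2 p.1) := hK.comp measurable_swap
    have h2 : AEMeasurable (fun p : ℝ × ℝ => F p.2) (volume.prod volume) := hF.comp_snd
    have h3 : Measurable (fun p : ℝ × ℝ => aux_w r p.1) := hw.comp measurable_fst
    exact h3.aemeasurable.mul (h1.aemeasurable.mul h2)

/-- weighted square integral -/
noncomputable def aux_W (r : ℝ) (f : ℝ → ℂ) : ℝ≥0∞ :=
  ∫⁻ x : ℝ, ENNReal.ofReal (|x| ^ (2 * r)) * ‖f x‖ₑ ^ 2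

/-- H1 square -/
noncomputable def aux_N (f : ℝ → ℂ) : ℝ≥0∞ :=
  ∫⁻ ξ : ℝ, ENNReal.ofReal (1 + ξ ^ 2) * ‖fourierT f ξ‖ₑ ^ 2

lemma aux_rpow_le (r : ℝ) (hr : 0 < r) (hr1 : r ≤ 1) (t η : ℝ) (ht : 0 ≤ t) :
    |(-(2 * t * η))| ^ (2 * r) ≤ 4 * t ^ (2 * r) * (1 + η ^ 2) := by
  rw [abs_neg, abs_mul, abs_mul, abs_of_nonneg ht, Real.mul_rpow (by positivity) (by positivity),
    Real.mul_rpow (by positivity) (by positivity)]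
  have h1 : |(2:ℝ)| ^ (2 * r) ≤ 4 := by
    rw [abs_of_pos two_pos]
    calc (2:ℝ) ^ (2 * r) ≤ 2 ^ (2:ℝ) := Real.rpow_le_rpow_of_exponent_le (by norm_num) (by linarith)
      _ = 4 := by norm_num
  have h2 : |η| ^ (2 * r) ≤ 1 + η ^ 2 := by
    rcases le_total |η| 1 with h | h
    · have := Real.rpow_le_one (abs_nonneg η) h (show 0 ≤ 2 * r by positivity)
      nlinarith [sq_nonneg η]
    · calc |η| ^ (2 * r) ≤ |η| ^ (2:ℝ) := Real.rpow_le_rpow_of_exponent_le h (by linarith)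
        _ = η ^ 2 := by rw [Real.rpow_two, sq_abs]
        _ ≤ _ := by linarith
  gcongr

lemma aux_lt_one (r : ℝ) (hr : 0 < r) (hr1 : r < 1) :
    ∃ D : ℝ≥0∞, D ≠ ⊤ ∧ ∀ (t : ℝ), 0 ≤ t → ∀ f : ℝ → ℂ, Integrable f → Integrable (fourierT f) →
      aux_W r (schrod t f) ≤ D * aux_W r f
        + D * ENNReal.ofReal (t ^ r + t ^ (2 * r)) * aux_N f := by
  have hE := aux_E_meas
  have hE0 : aux_E 0 = 0 := by simp [aux_E]
  set c := ∫⁻ h, aux_w r h * aux_E h with hc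
  set a := ∫⁻ h, aux_w r h * aux_E (-(h ^ 2)) with ha
  have hcT : c ≠ ⊤ := aux_fin r hr hr1 _ aux_E_le_four (fun h _ => aux_E_le_sq h)
  have haT : a ≠ ⊤ := aux_fin r hr hr1 (fun h => aux_E (-(h ^ 2))) (fun h => aux_E_le_four _) (fun h hh => by
    refine (aux_E_le_sq _).trans (ENNReal.ofReal_le_ofReal ?_)
    have : h ^ 2 ≤ 1 := by rw [← sq_abs]; nlinarith [abs_nonneg h]
    nlinarith [sq_nonneg h])
  have hc0 : c ≠ 0 := aux_pos r
  refine ⟨4 + a / c, by simp [haT, hc0, ENNReal.div_eq_top], ?_⟩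
  intro t ht f hf hF
  have hu := aux_schrod_meas f hf hF t
  have hfc := (aux_fT_cont f hf).measurable
  have T1 : ∀ φ : ℝ → ℂ, AEStronglyMeasurable φ volume →
      ∫⁻ h, aux_w r h * ∫⁻ x, aux_E (x * h) * ‖φ x‖ₑ ^ 2 = c * aux_W r φ := by
    intro φ hφ
    rw [aux_ton r (fun x h => aux_E (x * h)) (by fun_prop) _ (hφ.enorm.pow_const 2)]
    simp_rw [aux_scale r hr aux_E hE0]
    rw [aux_W, ← lintegral_const_mul' _ _ hcT]
    congr 1 with x
    rw [← hc]; ring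
  have T2 : ∫⁻ h, aux_w r h * ∫⁻ η, (aux_E (-(2 * t * η) * h) + aux_E (-(t * h ^ 2))) * ‖fourierT f η‖ₑ ^ 2
      ≤ (4 * c + a) * ENNReal.ofReal (t ^ r + t ^ (2 * r)) * aux_N f := by
    rw [aux_ton r (fun η h => aux_E (-(2 * t * η) * h) + aux_E (-(t * h ^ 2))) (by fun_prop) _ (by fun_prop)]
    rw [aux_N, ← lintegral_const_mul' _ _ (by finiteness)]
    refine lintegral_mono fun η => ?_
    rw [← mul_assoc]
    refine mul_le_mul_left ?_ _
    simp_rw [mul_add]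
    rw [lintegral_add_left (by have := aux_w_meas r; fun_prop), aux_scale r hr aux_E hE0, ← hc]
    have e : ∀ h, aux_E (-(t * h ^ 2)) = (fun y => aux_E (-(y ^ 2))) (√t * h) := by
      intro h; simp only [mul_pow, Real.sq_sqrt ht]
    simp_rw [e]
    rw [aux_scale r hr (fun y => aux_E (-(y ^ 2))) (by simp [hE0]), ← ha]
    have e2 : |√t| ^ (2 * r) = t ^ r := by
      rw [abs_of_nonneg (Real.sqrt_nonneg t), Real.rpow_mul (Real.sqrt_nonneg t), Real.rpow_two, Real.sq_sqrt ht]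
    rw [e2]
    have hp : 0 ≤ t ^ r := by positivity
    have hp2 : 0 ≤ t ^ (2 * r) := by positivity
    have b1 : ENNReal.ofReal (|(-(2 * t * η))| ^ (2 * r)) ≤ 4 * (ENNReal.ofReal (t ^ r + t ^ (2 * r)) * ENNReal.ofReal (1 + η ^ 2)) := by
      have h4 : (4 : ℝ≥0∞) = ENNReal.ofReal 4 := by simp
      rw [h4, ← ENNReal.ofReal_mul (by positivity), ← ENNReal.ofReal_mul (by positivity)]
      refine ENNReal.ofReal_le_ofReal ((aux_rpow_le r hr hr1.le t η ht).trans ?_)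
      nlinarith [mul_nonneg hp (show 0 ≤ 1 + η ^ 2 by positivity)]
    have b2 : ENNReal.ofReal (t ^ r) ≤ ENNReal.ofReal (t ^ r + t ^ (2 * r)) * ENNReal.ofReal (1 + η ^ 2) := by
      rw [← ENNReal.ofReal_mul (by positivity)]
      refine ENNReal.ofReal_le_ofReal ?_
      nlinarith [mul_nonneg hp (sq_nonneg η), mul_nonneg hp2 (show 0 ≤ 1 + η ^ 2 by positivity)]
    calc _ ≤ 4 * (ENNReal.ofReal (t ^ r + t ^ (2 * r)) * ENNReal.ofReal (1 + η ^ 2)) * c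
          + ENNReal.ofReal (t ^ r + t ^ (2 * r)) * ENNReal.ofReal (1 + η ^ 2) * a := by gcongr
      _ = _ := by ring
  have main : c * aux_W r (schrod t f) ≤ 2 * (c * aux_W r f)
      + (4 * c + a) * ENNReal.ofReal (t ^ r + t ^ (2 * r)) * aux_N f := by
    rw [← T1 _ hu.aestronglyMeasurable, ← T1 _ hf.1]
    calc _ ≤ ∫⁻ h, (2 * (aux_w r h * ∫⁻ x, aux_E (x * h) * ‖f x‖ₑ ^ 2) + aux_w r h *
          ∫⁻ η, (aux_E (-(2 * t * η) * h) + aux_E (-(t * h ^ 2))) * ‖fourierT f η‖ₑ ^ 2) := by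
            refine lintegral_mono fun h => ?_
            refine (mul_le_mul_right (aux_key f hf hF t h) _).trans (le_of_eq ?_)
            ring
      _ = 2 * (∫⁻ h, (aux_w r h * ∫⁻ x, aux_E (x * h) * ‖f x‖ₑ ^ 2)) + ∫⁻ h, aux_w r h *
          ∫⁻ η, (aux_E (-(2 * t * η) * h) + aux_E (-(t * h ^ 2))) * ‖fourierT f η‖ₑ ^ 2 := by
            rw [lintegral_add_right _ ?_, lintegral_const_mul' _ _ (by simp)]
            refine (aux_w_meas r).mul ?_
            refine Measurable.lintegral_prod_right' (f := fun p : ℝ × ℝ => (aux_E (-(2 * t * p.2) * p.1) + aux_E (-(t * p.1 ^ 2))) * ‖fourierT f p.2‖ₑ ^ 2) ?_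
            fun_prop
      _ ≤ _ := by gcongr
  have hcc : c⁻¹ * c = 1 := ENNReal.inv_mul_cancel hc0 hcT
  calc aux_W r (schrod t f) = c⁻¹ * (c * aux_W r (schrod t f)) := by rw [← mul_assoc, hcc, one_mul]
    _ ≤ c⁻¹ * (2 * (c * aux_W r f)
      + (4 * c + a) * ENNReal.ofReal (t ^ r + t ^ (2 * r)) * aux_N f) := by gcongr
    _ = (c⁻¹ * c) * 2 * aux_W r f + (4 * (c⁻¹ * c) + a * c⁻¹) * ENNReal.ofReal (t ^ r + t ^ (2 * r)) * aux_N f := by ring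
    _ ≤ _ := by
      rw [hcc, ← div_eq_mul_inv, one_mul, mul_one]
      gcongr
      calc (2 : ℝ≥0∞) ≤ 4 := by norm_num
        _ ≤ _ := le_self_add

lemma aux_E_ge (a : ℝ) (ha : |a| ≤ 1) : ENNReal.ofReal (a ^ 2) ≤ 4 * aux_E a := by
  have h1 : |a| / 4 ≤ Real.sin (|a| / 2) := by
    have := Real.mul_le_sin (x := |a| / 2) (by positivity) (by linarith [Real.pi_gt_three])
    have h2 : (1:ℝ) / 2 ≤ 2 / Real.pi := by
      rw [div_le_div_iff₀ two_pos Real.pi_pos]; linarith [Real.pi_le_four]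
    nlinarith [abs_nonneg a]
  have h2 : |Real.sin (a / 2)| = Real.sin (|a| / 2) := by
    rcases le_total 0 a with h | h
    · rw [abs_of_nonneg h, abs_of_nonneg]
      rw [abs_of_nonneg h] at h1; linarith
    · rw [abs_of_nonpos h, neg_div, Real.sin_neg, abs_of_nonpos]
      rw [abs_of_nonpos h, neg_div 2 a, Real.sin_neg] at h1; linarith
  unfold aux_E
  have h4 : (4 : ℝ≥0∞) = ENNReal.ofReal 4 := by simp
  rw [← ofReal_norm, Complex.norm_exp_I_mul_ofReal_sub_one, h4, ← ENNReal.ofReal_pow (norm_nonneg _),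
    ← ENNReal.ofReal_mul (by positivity)]
  refine ENNReal.ofReal_le_ofReal ?_
  rw [norm_mul, Real.norm_eq_abs, Real.norm_eq_abs, abs_of_pos two_pos, h2, ← sq_abs]
  nlinarith [abs_nonneg a]

lemma aux_one : ∀ (t : ℝ), 0 ≤ t → ∀ f : ℝ → ℂ, Integrable f → Integrable (fourierT f) →
      aux_W 1 (schrod t f) ≤ 16 * aux_W 1 f
        + 16 * ENNReal.ofReal (t ^ (1:ℝ) + t ^ (2 * (1:ℝ))) * aux_N f := by
  intro t ht f hf hF
  have hE := aux_E_meas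
  have hu := aux_schrod_meas f hf hF t
  have hfc := (aux_fT_cont f hf).measurable
  let s : ℕ → ℝ := fun n => 1 / ((n : ℝ) + 1)
  have hs0 : ∀ n, 0 < s n := fun n => by positivity
  have hs1 : ∀ n, s n ≤ 1 := fun n => by
    simp only [s]; rw [div_le_one (by positivity)]; linarith [(Nat.cast_nonneg n : (0:ℝ) ≤ n)]
  have hst : Tendsto s atTop (nhds 0) := tendsto_one_div_add_atTop_nhds_zero_nat
  have hi : ∀ n, ∀ y : ℝ, ENNReal.ofReal (s n ^ 2)⁻¹ * ENNReal.ofReal ((y * s n) ^ 2) = ENNReal.ofReal (y ^ 2) := by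
    intro n y
    have := hs0 n
    rw [← ENNReal.ofReal_mul (by positivity)]
    congr 1; field_simp
  have hW : ∀ φ : ℝ → ℂ, aux_W 1 φ = ∫⁻ x, ENNReal.ofReal (x ^ 2) * ‖φ x‖ₑ ^ 2 := by
    intro φ
    unfold aux_W
    congr 1 with x
    rw [mul_one, Real.rpow_two, sq_abs]
  have low : ∀ x, ENNReal.ofReal (x ^ 2) * ‖schrod t f x‖ₑ ^ 2 ≤
      liminf (fun n => 4 * ENNReal.ofReal (s n ^ 2)⁻¹ * (aux_E (x * s n) * ‖schrod t f x‖ₑ ^ 2)) atTop := by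
    intro x
    refine le_liminf_of_le (by isBoundedDefault) ?_
    have hx : Tendsto (fun n => |x * s n|) atTop (nhds 0) := by
      simpa using (hst.const_mul x).abs
    filter_upwards [hx.eventually (gt_mem_nhds one_pos)] with n hn
    rw [← hi n x]
    calc _ ≤ ENNReal.ofReal (s n ^ 2)⁻¹ * (4 * aux_E (x * s n)) * ‖schrod t f x‖ₑ ^ 2 := by
          gcongr; exact aux_E_ge _ hn.le
      _ = _ := by ring
  have up : ∀ n, ∫⁻ x, 4 * ENNReal.ofReal (s n ^ 2)⁻¹ * (aux_E (x * s n) * ‖schrod t f x‖ₑ ^ 2)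
      ≤ 16 * aux_W 1 f + 16 * ENNReal.ofReal (t ^ (1:ℝ) + t ^ (2 * (1:ℝ))) * aux_N f := by
    intro n
    have hs0n := hs0 n
    have hs1n := hs1 n
    rw [lintegral_const_mul' _ _ (by finiteness)]
    refine (mul_le_mul_right (aux_key f hf hF t (s n)) _).trans ?_
    rw [mul_add]
    refine add_le_add ?_ ?_
    · rw [hW, ← mul_assoc, ← lintegral_const_mul' _ _ (by finiteness), ← lintegral_const_mul' _ _ (by finiteness)]
      refine lintegral_mono fun x => ?_
      calc _ ≤ 4 * ENNReal.ofReal (s n ^ 2)⁻¹ * 2 * (ENNReal.ofReal ((x * s n) ^ 2) * ‖f x‖ₑ ^ 2) := by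
            gcongr; exact aux_E_le_sq _
        _ = 8 * ((ENNReal.ofReal (s n ^ 2)⁻¹ * ENNReal.ofReal ((x * s n) ^ 2)) * ‖f x‖ₑ ^ 2) := by ring
        _ ≤ _ := by rw [hi]; gcongr; norm_num
    · rw [aux_N, ← lintegral_const_mul' _ _ (by finiteness), ← lintegral_const_mul' _ _ (by finiteness)]
      refine lintegral_mono fun η => ?_
      have b : aux_E (-(2 * t * η) * s n) + aux_E (-(t * s n ^ 2))
          ≤ ENNReal.ofReal ((4 * t ^ 2 * (1 + η ^ 2)) * s n ^ 2) := by
        refine (add_le_add (aux_E_le_sq _) (aux_E_le_sq _)).trans ?_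
        rw [← ENNReal.ofReal_add (by positivity) (by positivity)]
        refine ENNReal.ofReal_le_ofReal ?_
        have : t ^ 2 * s n ^ 2 * s n ^ 2 ≤ t ^ 2 * s n ^ 2 * 1 := by
          gcongr; nlinarith
        nlinarith [show 0 ≤ t ^ 2 * s n ^ 2 by positivity]
      calc _ ≤ 4 * ENNReal.ofReal (s n ^ 2)⁻¹ * (ENNReal.ofReal ((4 * t ^ 2 * (1 + η ^ 2)) * s n ^ 2) * ‖fourierT f η‖ₑ ^ 2) := by
            gcongr
        _ = 4 * (ENNReal.ofReal (s n ^ 2)⁻¹ * ENNReal.ofReal ((4 * t ^ 2 * (1 + η ^ 2)) * s n ^ 2)) * ‖fourierT f η‖ₑ ^ 2 := by ring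
        _ ≤ _ := by
          refine le_of_le_of_eq ?_ (mul_assoc (16 * ENNReal.ofReal (t ^ (1:ℝ) + t ^ (2 * (1:ℝ))))
            (ENNReal.ofReal (1 + η ^ 2)) (‖fourierT f η‖ₑ ^ 2))
          refine mul_le_mul_left ?_ _
          rw [mul_assoc 16, ← ENNReal.ofReal_mul (by positivity), ← ENNReal.ofReal_mul (by positivity)]
          have h4 : (4 : ℝ≥0∞) = ENNReal.ofReal 4 := by simp
          have h16 : (16 : ℝ≥0∞) = ENNReal.ofReal 16 := by simp
          rw [h4, h16, ← ENNReal.ofReal_mul (by positivity), ← ENNReal.ofReal_mul (by positivity)]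
          refine ENNReal.ofReal_le_ofReal ?_
          have : (s n ^ 2)⁻¹ * (4 * t ^ 2 * (1 + η ^ 2) * s n ^ 2) = 4 * t ^ 2 * (1 + η ^ 2) := by
            field_simp
          rw [this, mul_one, Real.rpow_one, Real.rpow_two]
          nlinarith [mul_nonneg ht (show 0 ≤ 1 + η ^ 2 by positivity)]
  rw [hW (schrod t f)]
  refine (lintegral_mono low).trans ((lintegral_liminf_le (fun n => by fun_prop)).trans ?_)
  refine liminf_le_of_le (by isBoundedDefault) ?_
  intro b hb
  obtain ⟨n, hn⟩ := hb.exists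
  exact hn.trans (up n)

lemma aux_all (r : ℝ) (hr : r ∈ Set.Ioc (0:ℝ) 1) :
    ∃ D : ℝ≥0∞, D ≠ ⊤ ∧ ∀ (t : ℝ), 0 ≤ t → ∀ f : ℝ → ℂ, Integrable f → Integrable (fourierT f) →
      aux_W r (schrod t f) ≤ D * aux_W r f
        + D * ENNReal.ofReal (t ^ r + t ^ (2 * r)) * aux_N f := by
  rcases hr.2.lt_or_eq with h | h
  · exact aux_lt_one r hr.1 h
  · subst h
    exact ⟨16, by simp, aux_one⟩

lemma aux_wNorm (r : ℝ) (f : ℝ → ℂ) : wNorm r f = aux_W r f ^ (1/2 : ℝ) := by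
  unfold wNorm aux_W
  congr 2 with x
  rw [mul_comm, enorm_eq_nnnorm]

lemma aux_Hs (f : ℝ → ℂ) : HsNorm 1 f = aux_N f ^ (1/2 : ℝ) := by
  unfold HsNorm aux_N
  congr 2 with x
  rw [Real.rpow_one, ENNReal.ofReal_mul (by positivity), ENNReal.ofReal_pow (norm_nonneg _), ofReal_norm]

lemma aux_sqrt_le (r T : ℝ) (hT : 0 < T) :
    (ENNReal.ofReal (T ^ r + T ^ (2 * r))) ^ (1/2 : ℝ) ≤ ENNReal.ofReal (T ^ (r/2) + T ^ r) := by
  rw [ENNReal.ofReal_rpow_of_nonneg (by positivity) (by norm_num)]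
  refine ENNReal.ofReal_le_ofReal ?_
  refine (Real.rpow_add_le_add_rpow (by positivity) (by positivity) (by norm_num) (by norm_num)).trans (le_of_eq ?_)
  rw [← Real.rpow_mul hT.le, ← Real.rpow_mul hT.le]
  congr 2 <;> ring

/-- **Estimate (3.6)/(2.8) (weighted bound for the free Schrödinger group).** For
`r ∈ (0,1]` there is `C > 0` such that for all `T > 0` and `φ₀ ∈ H¹(ℝ) ∩ L²(|x|^{2r}dx)`:
`sup_{t∈[0,T]} ‖|x|^r e^{it∂ₓ²}φ₀‖_{L²} ≤ C[(T^{r/2}+T^r)‖φ₀‖_{H¹} + ‖|x|^r φ₀‖_{L²}]`. -/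
theorem weighted_free_group_bound (r : ℝ) (hr : r ∈ Set.Ioc (0:ℝ) 1) :
    ∃ C > (0:ℝ), ∀ T > (0:ℝ), ∀ φ₀ : ℝ → ℂ, MemHs 1 φ₀ → MemW r φ₀ →
      (⨆ t ∈ Set.Icc (0:ℝ) T, wNorm r (schrod t φ₀))
        ≤ ENNReal.ofReal (C * (T ^ (r/2) + T ^ r)) * HsNorm 1 φ₀
          + ENNReal.ofReal C * wNorm r φ₀ := by

  obtain ⟨D, hD, hmain⟩ := aux_all r hr
  have hDr : D ^ (1/2 : ℝ) ≠ ⊤ := by finiteness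
  refine ⟨(D ^ (1/2 : ℝ)).toReal + 1, by positivity, ?_⟩
  intro T hT φ₀ hH _
  set C := (D ^ (1/2 : ℝ)).toReal + 1 with hC
  have hCpos : 0 < C := by positivity
  have hDC : D ^ (1/2 : ℝ) ≤ ENNReal.ofReal C := by
    rw [← ENNReal.ofReal_toReal hDr]
    exact ENNReal.ofReal_le_ofReal (by simp [hC])
  refine iSup₂_le fun t ht => ?_
  by_cases hf : Integrable φ₀
  · have hN : aux_N φ₀ ≠ ⊤ := by
      intro h
      have h2 : HsNorm 1 φ₀ < ⊤ := hH
      rw [aux_Hs, h] at h2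
      simp at h2
    have hF : Integrable (fourierT φ₀) := by
      refine aux_integrable_fT φ₀ hf ?_
      convert hN using 1
      unfold aux_N
      congr 1 with x
      rw [Real.rpow_one, ENNReal.ofReal_mul (by positivity), ENNReal.ofReal_pow (norm_nonneg _), ofReal_norm]
    have h1 := hmain t ht.1 φ₀ hf hF
    have hr0 := hr.1
    have h2 : aux_W r (schrod t φ₀) ≤ D * aux_W r φ₀
        + D * ENNReal.ofReal (T ^ r + T ^ (2 * r)) * aux_N φ₀ := by
      refine h1.trans ?_
      have h0 := ht.1
      have h3 := ht.2
      gcongr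
    rw [aux_wNorm, aux_wNorm, aux_Hs, ENNReal.ofReal_mul hCpos.le]
    calc _ ≤ (D * aux_W r φ₀ + D * ENNReal.ofReal (T ^ r + T ^ (2 * r)) * aux_N φ₀) ^ (1/2 : ℝ) := by
          gcongr
      _ ≤ (D * aux_W r φ₀) ^ (1/2 : ℝ) + (D * ENNReal.ofReal (T ^ r + T ^ (2 * r)) * aux_N φ₀) ^ (1/2 : ℝ) :=
          ENNReal.rpow_add_le_add_rpow _ _ (by norm_num) (by norm_num)
      _ = D ^ (1/2 : ℝ) * ENNReal.ofReal (T ^ r + T ^ (2 * r)) ^ (1/2 : ℝ) * aux_N φ₀ ^ (1/2 : ℝ)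
          + D ^ (1/2 : ℝ) * aux_W r φ₀ ^ (1/2 : ℝ) := by
          rw [ENNReal.mul_rpow_of_nonneg _ _ (by norm_num), ENNReal.mul_rpow_of_nonneg _ _ (by norm_num),
            ENNReal.mul_rpow_of_nonneg _ _ (by norm_num), add_comm]
      _ ≤ _ := by
          gcongr
          exact aux_sqrt_le r T hT
  · have h0 : ∀ ξ, fourierT φ₀ ξ = 0 := by
      intro ξ
      unfold fourierT
      refine integral_undef ?_
      intro h
      apply hf
      have h2 := h.bdd_mul (c := 1) (f := fun x : ℝ => Complex.exp (Complex.I * ((x * ξ : ℝ) : ℂ)))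
        (Continuous.aestronglyMeasurable (by fun_prop)) (by
          filter_upwards with x
          rw [Complex.norm_exp_I_mul_ofReal])
      refine h2.congr ?_
      filter_upwards with x
      rw [← mul_assoc, ← Complex.exp_add]
      have : Complex.I * ((x * ξ : ℝ) : ℂ) + -(Complex.I * x * ξ) = 0 := by push_cast; ring
      rw [this]; simp
    have hs : ∀ x, schrod t φ₀ x = 0 := by
      intro x; simp [schrod, h0]
    have : wNorm r (schrod t φ₀) = 0 := by
      simp [wNorm, hs]
    rw [this]; exact zero_le
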